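/- In the cyclic sliding puzzle on L cells, suppose a legal move sequence σ returns the blank to its original cell, and let w(σ) denote the winding number of the blank, i.e. (number of moves in which the blank shifts from some cell c to c+1) minus (number of moves in which the blank shifts from some cell c to c−1), divided by L. Then the final configuration is obtained from the initial configuration by the cyclic rotation of the tokens by w(σ) steps in the cyclic ordering of the L−1 non-blank cells: if the non-blank cells are listed in cyclic order as c₁, …, c_{L−1}, then the token initially on c_r ends on c_{r−w(σ) mod (L−1)}. -/

import Mathlib

/-!
The cyclic sliding puzzle on `L ≥ 3` cells `ℤ/L`.

A configuration places `L - 1` distinguishable tokens (indexed by `Fin (L-1)`)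
injectively on the `L` cells, leaving exactly one cell, the *blank*, empty.  A
legal move slides the token on a cell adjacent to the blank into the blank, so
the blank shifts to the adjacent cell the token vacated.  Since every cell other
than the blank carries a token, a legal move sequence is just a list of
directions: `true` means the blank shifts from its cell `c` to `c + 1`, and
`false` means it shifts from `c` to `c - 1`.  A state is the pair
`(blank cell, token-position function)`.
-/

namespace CyclicPuzzle

/-- One legal move in direction `d`: the blank at `s.1` shifts to
`s.1 + 1` (if `d = true`) or `s.1 - 1` (if `d = false`), and the token that
occupied that cell slides onto the old blank cell. -/
def step (L : ℕ) (s : ZMod L × (Fin (L - 1) → ZMod L)) (d : Bool) :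
    ZMod L × (Fin (L - 1) → ZMod L) :=
  (s.1 + (if d then 1 else -1),
    fun x => if s.2 x = s.1 + (if d then 1 else -1) then s.1 else s.2 x)

/-- The state reached from the state `s` by executing the legal move sequence `σ`. -/
def run (L : ℕ) (s : ZMod L × (Fin (L - 1) → ZMod L)) (σ : List Bool) :
    ZMod L × (Fin (L - 1) → ZMod L) :=
  σ.foldl (step L) s

end CyclicPuzzle

/-!
Record the position of a token relative to the blank: how many tokens the blank has to pass, going
upwards, before it meets this one. A move transposes the blank with its neighbour, so it lowers
every such position by `1` modulo `L - 1` when the blank goes up and raises it by `1` when the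
blank goes down; in particular the token that is passed goes from first to last, or conversely. A
sequence of net shift `w * L` thus lowers every relative position by `w * L ≡ w` modulo `L - 1`.
-/

namespace CyclicPuzzle

/-- The `r`-th non-blank cell in cyclic order, going upwards from the blank `b` and counting from
`0`, so that `r = 0` is the cell `b + 1`. The encoding is meant for `L ≥ 2`. -/
def nonblankCell {L : ℕ} (b : ZMod L) (r : ZMod (L - 1)) : ZMod L :=
  b + ((r.val + 1 : ℕ) : ZMod L)

section NonblankCell

variable {L : ℕ}

theorem nonblankCell_zero (b : ZMod L) : nonblankCell b 0 = b + 1 := by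
  simp [nonblankCell]

theorem nonblankCell_natCast (b : ZMod L) {k : ℕ} (hk : k < L - 1) :
    nonblankCell b (k : ZMod (L - 1)) = b + ((k + 1 : ℕ) : ZMod L) := by
  rw [nonblankCell, ZMod.val_cast_of_lt hk]

variable [NeZero (L - 1)]

theorem nonblankCell_ne_blank (b : ZMod L) (r : ZMod (L - 1)) : nonblankCell b r ≠ b := by
  have val_lt : r.val < L - 1 := r.val_lt
  rw [nonblankCell, Ne, add_eq_left, ZMod.natCast_eq_zero_iff]
  exact Nat.not_dvd_of_pos_of_lt r.val.succ_pos (by lia)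

theorem nonblankCell_neg_one (b : ZMod L) : nonblankCell b (-1) = b - 1 := by
  have pos : 0 < L - 1 := NeZero.pos (L - 1)
  have neg_one_eq : (-1 : ZMod (L - 1)) = ((L - 1 - 1 : ℕ) : ZMod (L - 1)) := by
    simp [Nat.cast_pred pos]
  rw [neg_one_eq, nonblankCell_natCast b (by lia), Nat.sub_add_cancel pos,
    Nat.cast_pred (by lia), ZMod.natCast_self, zero_sub, sub_eq_add_neg]

theorem nonblankCell_add_one (b : ZMod L) {r : ZMod (L - 1)} (hr : r ≠ -1) :
    nonblankCell b (r + 1) = nonblankCell (b + 1) r := by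
  have val_add_one_ne : r.val + 1 ≠ L - 1 := fun h ↦ hr <| eq_neg_of_add_eq_zero_left <| by
    rw [← ZMod.natCast_zmod_val r, ← Nat.cast_succ, Nat.succ_eq_add_one, h, ZMod.natCast_self]
  have val_add_one_lt : r.val + 1 < L - 1 := lt_of_le_of_ne r.val_lt val_add_one_ne
  calc nonblankCell b (r + 1)
      = nonblankCell b ((r.val + 1 : ℕ) : ZMod (L - 1)) := by
        rw [Nat.cast_succ, ZMod.natCast_zmod_val]
    _ = b + ((r.val + 1 + 1 : ℕ) : ZMod L) := nonblankCell_natCast b val_add_one_lt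
    _ = nonblankCell (b + 1) r := by
        rw [nonblankCell]
        push_cast
        ring

theorem swap_nonblankCell_add_one (b : ZMod L) (r : ZMod (L - 1)) :
    Equiv.swap b (b + 1) (nonblankCell b (r + 1)) = nonblankCell (b + 1) r := by
  by_cases hr : r = -1
  · rw [hr, neg_add_cancel, nonblankCell_zero, nonblankCell_neg_one, Equiv.swap_apply_right,
      add_sub_cancel_right]
  · have ne_new_blank : nonblankCell b (r + 1) ≠ b + 1 :=
      nonblankCell_add_one b hr ▸ nonblankCell_ne_blank (b + 1) r
    rw [Equiv.swap_apply_of_ne_of_ne (nonblankCell_ne_blank b _) ne_new_blank,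
      nonblankCell_add_one b hr]

theorem swap_nonblankCell_sub_one (b : ZMod L) (r : ZMod (L - 1)) :
    Equiv.swap b (b - 1) (nonblankCell b (r - 1)) = nonblankCell (b - 1) r := by
  have forward := swap_nonblankCell_add_one (b - 1) (r - 1)
  rw [sub_add_cancel, sub_add_cancel] at forward
  rw [← forward, Equiv.swap_comm, Equiv.swap_apply_self]

end NonblankCell

/-- The net number of steps by which the moves `σ` shift the blank upwards; the winding number
is this divided by `L`. -/
def netShift (σ : List Bool) : ℤ :=
  σ.count true - σ.count false

theorem netShift_cons (d : Bool) (σ : List Bool) :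
    netShift (d :: σ) = (if d then 1 else -1) + netShift σ := by
  cases d <;> simp [netShift] <;> ring

section Moves

variable {L : ℕ}

theorem step_snd_eq_swap (s : ZMod L × (Fin (L - 1) → ZMod L)) (d : Bool) {x : Fin (L - 1)}
    (hx : s.2 x ≠ s.1) :
    (step L s d).2 x = Equiv.swap s.1 (step L s d).1 (s.2 x) := by
  simp only [step, Equiv.swap_apply_def, if_neg hx]

variable [NeZero (L - 1)]

theorem step_snd_eq_nonblankCell {s : ZMod L × (Fin (L - 1) → ZMod L)} (d : Bool)
    {x : Fin (L - 1)} {r : ZMod (L - 1)} (hx : s.2 x = nonblankCell s.1 r) :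
    (step L s d).2 x = nonblankCell (step L s d).1 (r - (if d then 1 else -1 : ℤ)) := by
  rw [step_snd_eq_swap s d (hx ▸ nonblankCell_ne_blank s.1 r), hx]
  cases d
  · simpa [step, ← sub_eq_add_neg] using swap_nonblankCell_sub_one s.1 (r + 1)
  · simpa [step] using swap_nonblankCell_add_one s.1 (r - 1)

theorem run_snd_eq_nonblankCell (σ : List Bool) {s : ZMod L × (Fin (L - 1) → ZMod L)}
    {x : Fin (L - 1)} {r : ZMod (L - 1)} (hx : s.2 x = nonblankCell s.1 r) :
    (run L s σ).2 x = nonblankCell (run L s σ).1 (r - netShift σ) := by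
  induction σ generalizing s r with
  | nil => simpa [run, netShift] using hx
  | cons d σ ih =>
    rw [netShift_cons, Int.cast_add, ← sub_sub]
    exact ih (step_snd_eq_nonblankCell d hx)

end Moves

theorem natCast_zmod_pred {L : ℕ} (hL : 0 < L) : (L : ZMod (L - 1)) = 1 := by
  rw [← sub_eq_zero, ← Nat.cast_pred hL, ZMod.natCast_self]

end CyclicPuzzle

open CyclicPuzzle in
/-- In the cyclic sliding puzzle on `L ≥ 3` cells, start from
a configuration with blank `b₀` and injective token placement `p₀` avoiding
`b₀`.  Suppose a legal move sequence `σ` returns the blank to `b₀`, and let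
`w` be the winding number of the blank, i.e.
`(#moves with blank shift c ↦ c+1) - (#moves with blank shift c ↦ c-1) = w * L`.
Listing the non-blank cells in cyclic order as `c_r = b₀ + r` for
`1 ≤ r ≤ L - 1`, the token initially on `c_r` ends on `c_{r - w mod (L-1)}`.
(Indices of non-blank cells are taken 0-based in `ℤ/(L-1)`: the token on
`b₀ + (r.val + 1)` ends on `b₀ + ((r - w).val + 1)`.) -/
theorem statement8 (L : ℕ) (hL : 3 ≤ L)
    (b₀ : ZMod L) (p₀ : Fin (L - 1) → ZMod L)
    (hinj : Function.Injective p₀) (hb : ∀ x, p₀ x ≠ b₀)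
    (σ : List Bool) (w : ℤ)
    (hret : (run L (b₀, p₀) σ).1 = b₀)
    (hw : (σ.count true : ℤ) - (σ.count false : ℤ) = w * L) :
    ∀ (x : Fin (L - 1)) (r : ZMod (L - 1)),
      p₀ x = b₀ + ((r.val + 1 : ℕ) : ZMod L) →
      (run L (b₀, p₀) σ).2 x
        = b₀ + (((r - (w : ZMod (L - 1))).val + 1 : ℕ) : ZMod L) := by
  intro x r hx
  have : NeZero (L - 1) := ⟨by lia⟩
  have shift_eq : (netShift σ : ZMod (L - 1)) = w := by
    rw [netShift, hw, Int.cast_mul, Int.cast_natCast, natCast_zmod_pred (by lia), mul_one]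
  have final_cell := run_snd_eq_nonblankCell σ (s := (b₀, p₀)) hx
  rwa [hret, shift_eq] at final_cell
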